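/- arXiv:math/0506370 — 4 statements merged into one kernel-verified Lean document; each statement's English description precedes it below -/
import Mathlib

section
/- Shuffle relation for iterated path integrals of the forms dt/(t−s): Let γ : [0,1] → ℂ be continuously differentiable and let s₁,…,s_{n+m} ∈ ℂ satisfy γ(u) ≠ sᵢ for all u ∈ [0,1] and all i = 1,…,n+m. Then I_γ(s₁,…,sₙ) · I_γ(s_{n+1},…,s_{n+m}) = Σ_{σ ∈ Sh(n,m)} I_γ(s_{σ(1)},…,s_{σ(n+m)}). -/
/-!
Write `N = n + m`. By Fubini the product of the two iterated integrals is one integral over the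
set of those `t ∈ [a,b]ᴺ` whose first `n` and last `m` coordinates are each increasing
(`shuffleDomain`). Almost every `t` has pairwise distinct coordinates (`ae_injective`), so it is
sorted by exactly one permutation `σ`, and `t` lies in the shuffle domain exactly when `σ` is a
shuffle. Hence the shuffle domain is, up to a null set, the disjoint union over the shuffles `σ` of
the simplices `{t | t ∘ σ ∈ Δᴺ}` (`indicator_shuffleDomain`). Permuting coordinates preserves
Lebesgue measure and carries each of these simplices to the standard one
(`setIntegral_permuted_simplex`). The integrand is continuous on the compact simplex, so the
integral is additive over this decomposition.
-/

open MeasureTheory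

/-- The simplex `Δⁿ(a,b) = {t : a ≤ t₁ ≤ … ≤ tₙ ≤ b}` inside `ℝⁿ`. -/
def simplex (n : ℕ) (a b : ℝ) : Set (Fin n → ℝ) :=
  {t | Monotone t ∧ ∀ i, t i ∈ Set.Icc a b}

/-- The iterated integral `I(f₁,…,fₙ; a, b) = ∫_{Δⁿ(a,b)} f₁(t₁)⋯fₙ(tₙ) dt`. -/
noncomputable def iterInt (n : ℕ) (f : Fin n → ℝ → ℂ) (a b : ℝ) : ℂ :=
  ∫ t in simplex n a b, ∏ i, f i (t i)

open Classical in
/-- The set of `(n,m)`-shuffles: permutations `σ` of `{0,…,n+m-1}` such that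
`σ⁻¹` is strictly increasing on the first `n` and on the last `m` indices. -/
noncomputable def shuffles (n m : ℕ) : Finset (Equiv.Perm (Fin (n + m))) :=
  Finset.univ.filter fun σ =>
    StrictMono (fun i : Fin n => σ.symm (Fin.castAdd m i)) ∧
    StrictMono (fun j : Fin m => σ.symm (Fin.natAdd n j))
/-- The iterated path integral
`∫_{a ≤ u₁ ≤ … ≤ uₙ ≤ b} ∏ᵢ γ'(uᵢ)/(γ(uᵢ) − sᵢ) du` for a path `γ` defined on `[0,1]`. -/
noncomputable def pathIterInt (γ : ℝ → ℂ) (n : ℕ) (s : Fin n → ℂ) (a b : ℝ) : ℂ :=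
  ∫ u in simplex n a b, ∏ i, derivWithin γ (Set.Icc 0 1) (u i) / (γ (u i) - s i)

/-- The tuples in `[a,b]ⁿ⁺ᵐ` whose first `n` and whose last `m` coordinates are increasing: the
image of `Δⁿ(a,b) × Δᵐ(a,b)` in `ℝⁿ⁺ᵐ`. -/
def shuffleDomain (n m : ℕ) (a b : ℝ) : Set (Fin (n + m) → ℝ) :=
  {t | (fun i : Fin n => t (Fin.castAdd m i)) ∈ simplex n a b ∧
    (fun j : Fin m => t (Fin.natAdd n j)) ∈ simplex m a b}

theorem isCompact_simplex (n : ℕ) (a b : ℝ) : IsCompact (simplex n a b) := by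
  have h : simplex n a b = {t | Monotone t} ∩ Set.univ.pi fun _ => Set.Icc a b := by
    ext t
    simp only [simplex, Set.mem_ofPred_eq, Set.mem_inter_iff, Set.mem_univ_pi]
  rw [h]
  refine (isCompact_univ_pi fun _ => isCompact_Icc).inter_left ?_
  simp only [Monotone, Set.ofPred_forall]
  exact isClosed_iInter fun i => isClosed_iInter fun j => isClosed_iInter fun _ =>
    isClosed_le (continuous_apply i) (continuous_apply j)

theorem ae_injective (N : ℕ) : ∀ᵐ t : Fin N → ℝ, Function.Injective t := by
  have h : ∀ i j : Fin N, i ≠ j → ∀ᵐ t : Fin N → ℝ, t i ≠ t j := by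
    intro i j hij
    -- `{t | t i = t j}` is a proper subspace: it misses the `i`-th basis vector.
    let S : Submodule ℝ (Fin N → ℝ) :=
      LinearMap.ker ((LinearMap.proj i : (Fin N → ℝ) →ₗ[ℝ] ℝ) - LinearMap.proj j)
    have hS : S ≠ ⊤ := by
      intro h
      have : (Pi.single i 1 : Fin N → ℝ) ∈ S := h ▸ Submodule.mem_top
      simp [S, hij.symm] at this
    rw [ae_iff]
    convert Measure.addHaar_submodule volume S hS using 2
    ext t
    simp [S, sub_eq_zero]
  have h' : ∀ᵐ t : Fin N → ℝ, ∀ i j : Fin N, i ≠ j → t i ≠ t j := by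
    rw [ae_all_iff]; intro i
    rw [ae_all_iff]; intro j
    by_cases hij : i = j
    · simp [hij]
    · simpa [hij] using h i j hij
  filter_upwards [h'] with t ht i j hij
  by_contra hne
  exact ht i j hne hij

theorem continuousOn_prod_simplex {N : ℕ} {a b : ℝ} (f : Fin N → ℝ → ℂ)
    (hf : ∀ i, ContinuousOn (f i) (Set.Icc a b)) :
    ContinuousOn (fun t : Fin N → ℝ => ∏ i, f i (t i)) (simplex N a b) :=
  continuousOn_finsetProd _ fun i _ =>
    (hf i).comp (continuous_apply i).continuousOn fun _ ht => ht.2 i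

theorem measurePreserving_comp_perm {N : ℕ} (σ : Equiv.Perm (Fin N)) :
    MeasurePreserving (MeasurableEquiv.arrowCongr' σ (MeasurableEquiv.refl ℝ)) :=
  volume_preserving_arrowCongr' σ (MeasurableEquiv.refl ℝ) (MeasurePreserving.id volume)

theorem arrowCongr'_refl_apply {N : ℕ} (σ : Equiv.Perm (Fin N)) (u : Fin N → ℝ) (i : Fin N) :
    MeasurableEquiv.arrowCongr' σ (MeasurableEquiv.refl ℝ) u (σ i) = u i := by
  change u (σ.symm (σ i)) = u i
  rw [σ.symm_apply_apply]

theorem preimage_permuted_simplex {N : ℕ} {a b : ℝ} (σ : Equiv.Perm (Fin N)) :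
    MeasurableEquiv.arrowCongr' σ (MeasurableEquiv.refl ℝ) ⁻¹' {t | t ∘ σ ∈ simplex N a b} =
      simplex N a b := by
  ext u
  have : (MeasurableEquiv.arrowCongr' σ (MeasurableEquiv.refl ℝ) u) ∘ σ = u :=
    funext (arrowCongr'_refl_apply σ u)
  simp only [Set.mem_preimage, Set.mem_ofPred_eq, this]

theorem prod_arrowCongr' {N : ℕ} (f : Fin N → ℝ → ℂ) (σ : Equiv.Perm (Fin N)) (u : Fin N → ℝ) :
    ∏ i, f i (MeasurableEquiv.arrowCongr' σ (MeasurableEquiv.refl ℝ) u i) =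
      ∏ i, f (σ i) (u i) := by
  rw [← Equiv.prod_comp σ]
  simp only [arrowCongr'_refl_apply]

theorem setIntegral_permuted_simplex {N : ℕ} {a b : ℝ} (f : Fin N → ℝ → ℂ)
    (σ : Equiv.Perm (Fin N)) :
    ∫ t in {t | t ∘ σ ∈ simplex N a b}, ∏ i, f i (t i) =
      ∫ u in simplex N a b, ∏ i, f (σ i) (u i) := by
  rw [← (measurePreserving_comp_perm σ).setIntegral_preimage_emb
    (MeasurableEquiv.measurableEmbedding _), preimage_permuted_simplex]
  simp only [prod_arrowCongr']

theorem integrableOn_permuted_simplex {N : ℕ} {a b : ℝ} (f : Fin N → ℝ → ℂ)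
    (hf : ∀ i, ContinuousOn (f i) (Set.Icc a b)) (σ : Equiv.Perm (Fin N)) :
    IntegrableOn (fun t => ∏ i, f i (t i)) {t | t ∘ σ ∈ simplex N a b} := by
  rw [← (measurePreserving_comp_perm σ).integrableOn_comp_preimage
    (MeasurableEquiv.measurableEmbedding _), preimage_permuted_simplex]
  simp only [Function.comp_def, prod_arrowCongr']
  exact (continuousOn_prod_simplex _ fun i => hf (σ i)).integrableOn_compact
    (isCompact_simplex N a b)

theorem measurableSet_permuted_simplex {N : ℕ} {a b : ℝ} (σ : Equiv.Perm (Fin N)) :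
    MeasurableSet {t : Fin N → ℝ | t ∘ σ ∈ simplex N a b} :=
  (isCompact_simplex N a b).measurableSet.preimage
    (measurable_pi_lambda _ fun i => measurable_pi_apply (σ i))

theorem measurableSet_shuffleDomain (n m : ℕ) (a b : ℝ) :
    MeasurableSet (shuffleDomain n m a b) :=
  ((isCompact_simplex n a b).measurableSet.preimage
    (measurable_pi_lambda _ fun i => measurable_pi_apply (Fin.castAdd m i))).inter
  ((isCompact_simplex m a b).measurableSet.preimage
    (measurable_pi_lambda _ fun i => measurable_pi_apply (Fin.natAdd n i)))

/-- For a tuple with distinct coordinates, lying in the shuffle domain means being sorted by a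
shuffle. -/
theorem mem_shuffleDomain_iff {n m : ℕ} {a b : ℝ} {t : Fin (n + m) → ℝ}
    (ht : Function.Injective t) {σ : Equiv.Perm (Fin (n + m))} (hσ : Monotone (t ∘ σ)) :
    t ∈ shuffleDomain n m a b ↔ σ ∈ shuffles n m ∧ t ∘ σ ∈ simplex (n + m) a b := by
  have hstrict : StrictMono (t ∘ σ) := hσ.strictMono_of_injective (ht.comp σ.injective)
  have key : ∀ k l, σ.symm k < σ.symm l ↔ t k < t l := fun k l => by
    simpa using (hstrict.lt_iff_lt (a := σ.symm k) (b := σ.symm l)).symm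
  simp only [shuffles, Finset.mem_filter, Finset.mem_univ, true_and]
  constructor
  · rintro ⟨⟨h1, h1'⟩, h2, h2'⟩
    refine ⟨⟨fun i j hij => ?_, fun i j hij => ?_⟩, hσ, fun i => ?_⟩
    · exact (key _ _).2 (h1.strictMono_of_injective
        (ht.comp (Fin.castAdd_injective n m)) hij)
    · exact (key _ _).2 (h2.strictMono_of_injective
        (ht.comp (Fin.natAdd_injective m n)) hij)
    · have : ∀ k, t k ∈ Set.Icc a b := fun k => Fin.addCases h1' h2' k
      exact this _
  · rintro ⟨⟨h1, h2⟩, -, h3⟩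
    have h3' : ∀ k, t k ∈ Set.Icc a b := fun k => by simpa using h3 (σ.symm k)
    have h1' : StrictMono fun i : Fin n => t (Fin.castAdd m i) :=
      fun i j hij => (key _ _).1 (h1 hij)
    have h2' : StrictMono fun j : Fin m => t (Fin.natAdd n j) :=
      fun i j hij => (key _ _).1 (h2 hij)
    exact ⟨⟨h1'.monotone, fun _ => h3' _⟩, h2'.monotone, fun _ => h3' _⟩

/-- The decomposition of the shuffle domain into permuted simplices, at the tuples with distinct
coordinates. -/
theorem indicator_shuffleDomain {n m : ℕ} {a b : ℝ} (F : (Fin (n + m) → ℝ) → ℂ)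
    {t : Fin (n + m) → ℝ} (ht : Function.Injective t) :
    (shuffleDomain n m a b).indicator F t =
      ∑ σ ∈ shuffles n m, {t | t ∘ σ ∈ simplex (n + m) a b}.indicator F t := by
  classical
  have hs := Tuple.monotone_sort t
  have hne : ∀ σ : Equiv.Perm (Fin (n + m)), σ ≠ Tuple.sort t →
      {t | t ∘ σ ∈ simplex (n + m) a b}.indicator F t = 0 := by
    intro σ hσ
    refine Set.indicator_of_notMem (fun hmem => hσ ?_) F
    have := Tuple.unique_monotone hmem.1 hs
    exact Equiv.ext fun i => ht (congrFun this i)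
  by_cases hmem : Tuple.sort t ∈ shuffles n m
  · rw [Finset.sum_eq_single_of_mem _ hmem fun σ _ hσ => hne σ hσ]
    simp only [Set.indicator, mem_shuffleDomain_iff ht hs, hmem, true_and, Set.mem_ofPred_eq]
  · rw [Finset.sum_eq_zero fun σ hσ => hne σ fun h => hmem (h ▸ hσ)]
    exact Set.indicator_of_notMem (fun h => hmem ((mem_shuffleDomain_iff ht hs).1 h).1) F

theorem setIntegral_shuffleDomain {n m : ℕ} {a b : ℝ} (f : Fin (n + m) → ℝ → ℂ) :
    ∫ t in shuffleDomain n m a b, ∏ i, f i (t i) =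
      (∫ x in simplex n a b, ∏ i, f (Fin.castAdd m i) (x i)) *
        ∫ y in simplex m a b, ∏ j, f (Fin.natAdd n j) (y j) := by
  rw [← setIntegral_prod_mul]
  have h1 := volume_measurePreserving_sumPiEquivProdPi fun _ : Fin n ⊕ Fin m => ℝ
  have h2 : MeasurePreserving
      (MeasurableEquiv.arrowCongr' finSumFinEquiv.symm (MeasurableEquiv.refl ℝ)) :=
    volume_preserving_arrowCongr' (finSumFinEquiv (m := n) (n := m)).symm
      (MeasurableEquiv.refl ℝ) (MeasurePreserving.id volume)
  have h := (h1.comp h2).setIntegral_preimage_emb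
    ((MeasurableEquiv.measurableEmbedding _).comp (MeasurableEquiv.measurableEmbedding _))
    (fun z : (Fin n → ℝ) × (Fin m → ℝ) =>
      (∏ i, f (Fin.castAdd m i) (z.1 i)) * ∏ j, f (Fin.natAdd n j) (z.2 j))
    (simplex n a b ×ˢ simplex m a b)
  refine Eq.trans ?_ h
  simp only [Fin.prod_univ_add]
  rfl

/-- The shuffle relation for iterated integrals of continuous functions. -/
theorem simplex_shuffle {n m : ℕ} {a b : ℝ} (f : Fin (n + m) → ℝ → ℂ)
    (hf : ∀ i, ContinuousOn (f i) (Set.Icc a b)) :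
    (∫ x in simplex n a b, ∏ i, f (Fin.castAdd m i) (x i)) *
        (∫ y in simplex m a b, ∏ j, f (Fin.natAdd n j) (y j)) =
      ∑ σ ∈ shuffles n m, ∫ u in simplex (n + m) a b, ∏ i, f (σ i) (u i) := by
  rw [← setIntegral_shuffleDomain, ← integral_indicator (measurableSet_shuffleDomain n m a b)]
  simp only [← setIntegral_permuted_simplex,
    ← integral_indicator (measurableSet_permuted_simplex _)]
  rw [← integral_finsetSum _ fun σ _ =>
    (integrableOn_permuted_simplex f hf σ).integrable_indicator (measurableSet_permuted_simplex σ)]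
  refine integral_congr_ae ?_
  filter_upwards [ae_injective (n + m)] with t ht
  exact indicator_shuffleDomain _ ht

/-- Shuffle relation for iterated path integrals of the forms `dt/(t−sᵢ)`. -/
theorem pathIterInt_shuffle (γ : ℝ → ℂ) (hγ : ContDiffOn ℝ 1 γ (Set.Icc 0 1))
    (n m : ℕ) (s : ℕ → ℂ)
    (hs : ∀ u ∈ Set.Icc (0 : ℝ) 1, ∀ i < n + m, γ u ≠ s i) :
    pathIterInt γ n (fun i => s i) 0 1 * pathIterInt γ m (fun j => s (n + j)) 0 1 =
      ∑ σ ∈ shuffles n m, pathIterInt γ (n + m) (fun i => s (σ i)) 0 1 := by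
  refine simplex_shuffle
    (fun (i : Fin (n + m)) u => derivWithin γ (Set.Icc 0 1) u / (γ u - s i)) fun i => ?_
  exact (hγ.continuousOn_derivWithin uniqueDiffOn_Icc_zero_one le_rfl).div
    (hγ.continuousOn.sub continuousOn_const) fun u hu => sub_ne_zero.2 (hs u hu i i.isLt)
end

section
/- Iterated integral representation of the double polylogarithm Li_{p,q}: Let p, q ≥ 1 and let z be a real number with 0 < z < 1. Then ∫_{Δ^{p+q}(0,z)} (1/(1−t₁)) · ∏_{i=2}^{p} (1/tᵢ) · (1/(1−t_{p+1})) · ∏_{i=p+2}^{p+q} (1/tᵢ) dt₁⋯dt_{p+q} = Σ_{0<j<k} z^k/(j^p · k^q), where the integrand is Lebesgue-integrable on the simplex and the double series converges absolutely. -/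
/-!
All integrands are nonnegative on the simplex, so the computation is carried out with lower
Lebesgue integrals, where Tonelli and termwise integration of series are unconditional.

Splitting off the largest variable identifies the integral over `Δⁿ(0,z)` with the iterated integral
`wordInt f n z`, `wordInt f (n+1) z = ∫₀ᶻ f n s * wordInt f n s ds` (`lintegral_simplex`).
If `wordInt f n s` is a series `∑ a_c s^(k_c)`, then integrating against `1/s` divides each
coefficient by its exponent (`lintegral_inv_mul_tsum`), while integrating against
`1/(1-s) = ∑ s^m` replaces each term by `∑ₘ a_c s^(k_c+m+1)/(k_c+m+1)`
(`lintegral_inv_one_sub_mul_tsum`). Starting from the constant `1`, the first `p` forms yield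
`∑_{j>0} z^j/j^p` and the remaining `q` yield `∑_{0<j<k} z^k/(j^p k^q)`, indexed by
`(j-1, k-j-1) ∈ ℕ × ℕ`. The series is dominated by a product of two geometric series, hence
everything is finite, and real integrability and the real identity follow.
-/

open MeasureTheory

open scoped ENNReal

/-! ### Simplex integrals as iterated integrals -/

/-- The iterated integral `∫₀ᶻ f (n-1) (s) ∫₀ˢ f (n-2) ⋯` of a word of `ℝ≥0∞`-valued weights;
the weight `f (n-1)` belongs to the outermost (largest) variable. The half-open interval excludes
the point `0`, where `1/s` has the junk value `0`. -/
noncomputable def wordInt (f : ℕ → ℝ → ℝ≥0∞) : ℕ → ℝ → ℝ≥0∞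
  | 0, _ => 1
  | n + 1, z => ∫⁻ s in Set.Ioc 0 z, f n s * wordInt f n s

lemma measurableSet_simplex (n : ℕ) (a b : ℝ) : MeasurableSet (simplex n a b) := by
  have : simplex n a b =
      (⋂ i, ⋂ j, {t : Fin n → ℝ | i ≤ j → t i ≤ t j}) ∩ ⋂ i, {t | t i ∈ Set.Icc a b} := by
    ext t
    simp [simplex, Monotone]
  rw [this]
  refine (MeasurableSet.iInter fun i => MeasurableSet.iInter fun j => ?_).inter
    (MeasurableSet.iInter fun i => measurableSet_Icc.preimage (measurable_pi_apply i))
  by_cases h : i ≤ j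
  · simpa [h] using measurableSet_le (measurable_pi_apply i) (measurable_pi_apply j)
  · simp [h]

lemma snoc_mem_simplex {n : ℕ} {a b x : ℝ} {y : Fin n → ℝ} :
    (Fin.last n).insertNth x y ∈ simplex (n + 1) a b ↔
      x ∈ Set.Icc a b ∧ y ∈ simplex n a x := by
  simp only [simplex, Set.mem_ofPred_eq, Fin.insertNth_last', Set.mem_Icc]
  constructor
  · rintro ⟨hm, hb⟩
    refine ⟨by simpa using hb (Fin.last n), fun i j hij => ?_, fun i => ⟨?_, ?_⟩⟩
    · simpa using hm (Fin.castSucc_le_castSucc_iff.2 hij)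
    · simpa using (hb i.castSucc).1
    · simpa using hm (Fin.le_last i.castSucc)
  · rintro ⟨hx, hm, hb⟩
    refine ⟨fun i j hij => ?_, fun i => ?_⟩
    · induction j using Fin.lastCases with
      | last =>
        induction i using Fin.lastCases with
        | last => exact le_rfl
        | cast i => simpa using (hb i).2
      | cast j =>
        induction i using Fin.lastCases with
        | last => exact absurd hij (not_le.2 (Fin.castSucc_lt_last j))
        | cast i => simpa using hm (Fin.castSucc_le_castSucc_iff.1 hij)
    · induction i using Fin.lastCases with
      | last => simpa using hx
      | cast i => simpa using ⟨(hb i).1, (hb i).2.trans hx.2⟩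

/-- Tonelli for the simplex: splitting off the largest variable. -/
lemma lintegral_simplex (f : ℕ → ℝ → ℝ≥0∞) (hf : ∀ i, Measurable (f i)) (n : ℕ) (z : ℝ) :
    ∫⁻ t in simplex n 0 z, ∏ i : Fin n, f i (t i) = wordInt f n z := by
  have hprod : ∀ n, Measurable fun t : Fin n → ℝ => ∏ i : Fin n, f i (t i) := fun n =>
    Finset.measurable_fun_prod _ fun i _ => (hf i).comp (measurable_pi_apply i)
  induction n generalizing z with
  | zero =>
    have : simplex 0 0 z = Set.univ := by
      ext t
      simp [simplex, Subsingleton.monotone]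
    simp [this, wordInt, volume_pi]
  | succ n ih =>
    have hmp := (volume_preserving_piFinSuccAbove (fun _ : Fin (n + 1) => ℝ) (Fin.last n)).symm
    have hmeas : Measurable fun t : Fin (n + 1) → ℝ =>
        (simplex (n + 1) 0 z).indicator (fun t => ∏ i : Fin (n + 1), f i (t i)) t :=
      (hprod _).indicator (measurableSet_simplex _ _ _)
    rw [← lintegral_indicator (measurableSet_simplex _ _ _), ← hmp.lintegral_comp hmeas,
      Measure.volume_eq_prod,
      lintegral_prod _ (by exact (hmeas.comp hmp.measurable).aemeasurable), wordInt,
      restrict_Ioc_eq_restrict_Icc, ← lintegral_indicator measurableSet_Icc]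
    refine lintegral_congr fun x => ?_
    have hval : ∀ y : Fin n → ℝ,
        (MeasurableEquiv.piFinSuccAbove (fun _ : Fin (n + 1) => ℝ) (Fin.last n)).symm (x, y) =
          (Fin.last n).insertNth x y := fun y => rfl
    simp only [hval]
    by_cases hx : x ∈ Set.Icc 0 z
    · have : ∀ y : Fin n → ℝ, (simplex (n + 1) 0 z).indicator
          (fun t => ∏ i : Fin (n + 1), f i (t i)) ((Fin.last n).insertNth x y) =
          f n x * (simplex n 0 x).indicator (fun t => ∏ i : Fin n, f i (t i)) y := by
        intro y
        by_cases hy : y ∈ simplex n 0 x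
        · rw [Set.indicator_of_mem (snoc_mem_simplex.2 ⟨hx, hy⟩), Set.indicator_of_mem hy,
            Fin.prod_univ_castSucc]
          simp [Fin.insertNth_last', mul_comm]
        · rw [Set.indicator_of_notMem (fun h => hy (snoc_mem_simplex.1 h).2),
            Set.indicator_of_notMem hy, mul_zero]
      simp only [this]
      rw [lintegral_const_mul _ ((hprod _).indicator (measurableSet_simplex _ _ _)),
        lintegral_indicator (measurableSet_simplex _ _ _), ih, Set.indicator_of_mem hx]
    · rw [Set.indicator_of_notMem hx]
      have : ∀ y : Fin n → ℝ, (simplex (n + 1) 0 z).indicator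
          (fun t => ∏ i : Fin (n + 1), f i (t i)) ((Fin.last n).insertNth x y) = 0 := fun y =>
        Set.indicator_of_notMem (fun h => hx (snoc_mem_simplex.1 h).1) _
      simp only [this, lintegral_zero]

/-! ### Termwise integration of power series -/

lemma lintegral_monomial {a z : ℝ} (ha : 0 ≤ a) (hz : 0 ≤ z) (n : ℕ) :
    ∫⁻ s in Set.Ioc 0 z, ENNReal.ofReal (a * s ^ n) =
      ENNReal.ofReal (a / (n + 1) * z ^ (n + 1)) := by
  rw [← ofReal_integral_eq_lintegral_ofReal]
  · rw [← intervalIntegral.integral_of_le hz, intervalIntegral.integral_const_mul, integral_pow]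
    congr 1
    simp
    ring
  · exact ((by fun_prop : Continuous fun s : ℝ => a * s ^ n).integrableOn_Icc).mono_set
      Set.Ioc_subset_Icc_self
  · refine (ae_restrict_iff' measurableSet_Ioc).2 (.of_forall fun s hs => ?_)
    have := hs.1.le
    simp only [Pi.zero_apply]
    positivity

/-- Integration against `ds/s` divides each coefficient by its (positive) exponent. -/
lemma lintegral_inv_mul_tsum {ι : Type*} [Countable ι] (a : ι → ℝ) (k : ι → ℕ)
    (ha : ∀ c, 0 ≤ a c) {z : ℝ} (hz : 0 ≤ z) :
    ∫⁻ s in Set.Ioc 0 z, ENNReal.ofReal (1 / s) * ∑' c, ENNReal.ofReal (a c * s ^ (k c + 1)) =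
      ∑' c, ENNReal.ofReal (a c / (k c + 1) * z ^ (k c + 1)) := by
  have : ∀ s ∈ Set.Ioc 0 z,
      ENNReal.ofReal (1 / s) * ∑' c, ENNReal.ofReal (a c * s ^ (k c + 1)) =
        ∑' c, ENNReal.ofReal (a c * s ^ k c) := by
    intro s hs
    rw [← ENNReal.tsum_mul_left]
    refine tsum_congr fun c => ?_
    have h0 := hs.1
    rw [← ENNReal.ofReal_mul (by positivity)]
    congr 1
    rw [pow_succ]
    field_simp
  rw [setLIntegral_congr_fun measurableSet_Ioc this, lintegral_tsum fun c => by fun_prop]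
  exact tsum_congr fun c => lintegral_monomial (ha c) hz _

/-- Integration against `ds/(1-s)`, by expanding the geometric series. -/
lemma lintegral_inv_one_sub_mul_tsum {ι : Type*} [Countable ι] (a : ι → ℝ) (k : ι → ℕ)
    (ha : ∀ c, 0 ≤ a c) {z : ℝ} (hz : 0 ≤ z) (hz1 : z < 1) :
    ∫⁻ s in Set.Ioc 0 z, ENNReal.ofReal (1 / (1 - s)) * ∑' c, ENNReal.ofReal (a c * s ^ k c) =
      ∑' x : ι × ℕ, ENNReal.ofReal
        (a x.1 / ((k x.1 + x.2 : ℕ) + 1) * z ^ (k x.1 + x.2 + 1)) := by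
  have : ∀ s ∈ Set.Ioc 0 z,
      ENNReal.ofReal (1 / (1 - s)) * ∑' c, ENNReal.ofReal (a c * s ^ k c) =
        ∑' x : ι × ℕ, ENNReal.ofReal (a x.1 * s ^ (k x.1 + x.2)) := by
    intro s hs
    have h0 := hs.1.le
    have h1 := hs.2.trans_lt hz1
    rw [ENNReal.tsum_prod', ← ENNReal.tsum_mul_left]
    refine tsum_congr fun c => ?_
    rw [one_div, ← tsum_geometric_of_lt_one h0 h1,
      ENNReal.ofReal_tsum_of_nonneg (fun m => by positivity)
        (summable_geometric_of_lt_one h0 h1), ← ENNReal.tsum_mul_right]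
    refine tsum_congr fun m => ?_
    rw [← ENNReal.ofReal_mul (by positivity)]
    congr 1
    ring
  rw [setLIntegral_congr_fun measurableSet_Ioc this, lintegral_tsum fun c => by fun_prop]
  exact tsum_congr fun c => lintegral_monomial (ha c.1) hz _

/-! ### The word of the double polylogarithm -/

/-- The weights of the word of `Li_{p,q}`: `1/(1-s)` in positions `0` and `p`, and `1/s` in
the others. -/
noncomputable def polylogWeight (p i : ℕ) (s : ℝ) : ℝ :=
  if i = 0 ∨ i = p then 1 / (1 - s) else 1 / s

lemma measurable_polylogWeight (p i : ℕ) : Measurable (polylogWeight p i) := by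
  unfold polylogWeight
  split_ifs <;> fun_prop

/-- Each nonempty prefix of length at most `p` produces the single polylogarithm of that weight. -/
lemma wordInt_single (p n : ℕ) (hn : n + 1 ≤ p) {z : ℝ} (hz : 0 ≤ z) (hz1 : z < 1) :
    wordInt (fun i s => ENNReal.ofReal (polylogWeight p i s)) (n + 1) z =
      ∑' j : ℕ, ENNReal.ofReal (1 / ((j : ℝ) + 1) ^ (n + 1) * z ^ (j + 1)) := by
  induction n generalizing z with
  | zero =>
    have h := lintegral_inv_one_sub_mul_tsum (fun _ : Unit => 1) (fun _ => 0)
      (fun _ => zero_le_one) hz hz1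
    rw [ENNReal.tsum_prod'] at h
    simpa [wordInt, polylogWeight] using h
  | succ n ih =>
    have h := lintegral_inv_mul_tsum (fun j : ℕ => 1 / ((j : ℝ) + 1) ^ (n + 1)) (fun j => j)
      (fun j => by positivity) hz
    rw [wordInt]
    refine (setLIntegral_congr_fun measurableSet_Ioc fun s hs => ?_).trans
      (h.trans (tsum_congr fun j => ?_))
    · have hw : polylogWeight p (n + 1) s = 1 / s := if_neg (by omega)
      simp only [hw, ih (by omega) hs.1.le (hs.2.trans_lt hz1)]
    · congr 2
      rw [div_div, ← pow_succ]

/-- The whole word produces the double series; `(j, m)` stands for the pair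
`(j+1, j+m+2)` of summation indices. -/
lemma wordInt_double (p r : ℕ) (hp : 1 ≤ p) {z : ℝ} (hz : 0 ≤ z) (hz1 : z < 1) :
    wordInt (fun i s => ENNReal.ofReal (polylogWeight p i s)) (p + r + 1) z =
      ∑' x : ℕ × ℕ, ENNReal.ofReal (1 / (((x.1 : ℝ) + 1) ^ p *
        (((x.1 + 1 + x.2 : ℕ) : ℝ) + 1) ^ (r + 1)) * z ^ (x.1 + 1 + x.2 + 1)) := by
  induction r generalizing z with
  | zero =>
    have h := lintegral_inv_one_sub_mul_tsum (fun j : ℕ => 1 / ((j : ℝ) + 1) ^ p)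
      (fun j => j + 1) (fun j => by positivity) hz hz1
    rw [wordInt]
    refine (setLIntegral_congr_fun measurableSet_Ioc fun s hs => ?_).trans
      (h.trans (tsum_congr fun x => ?_))
    · obtain ⟨n, rfl⟩ : ∃ n, p = n + 1 := ⟨p - 1, by omega⟩
      have hw : polylogWeight (n + 1) (n + 1 + 0) s = 1 / (1 - s) := if_pos (by simp)
      simp only [hw]
      rw [wordInt_single (n + 1) n le_rfl hs.1.le (hs.2.trans_lt hz1)]
    · congr 2
      rw [div_div, zero_add, pow_one]
  | succ r ih =>
    have h := lintegral_inv_mul_tsum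
      (fun x : ℕ × ℕ => 1 / (((x.1 : ℝ) + 1) ^ p * (((x.1 + 1 + x.2 : ℕ) : ℝ) + 1) ^ (r + 1)))
      (fun x => x.1 + 1 + x.2) (fun x => by positivity) hz
    rw [wordInt]
    refine (setLIntegral_congr_fun measurableSet_Ioc fun s hs => ?_).trans
      (h.trans (tsum_congr fun x => ?_))
    · have hw : polylogWeight p (p + (r + 1)) s = 1 / s := if_neg (by omega)
      simp only [hw]
      rw [← add_assoc, ih hs.1.le (hs.2.trans_lt hz1)]
    · congr 2
      rw [div_div, mul_assoc, ← pow_succ]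

/-- The parametrization of the pairs `0 < j < k` by `ℕ × ℕ`. -/
def pairEmb (x : ℕ × ℕ) : ℕ × ℕ := (x.1 + 1, x.1 + 1 + x.2 + 1)

lemma pairEmb_injective : Function.Injective pairEmb := by
  rintro ⟨a, b⟩ ⟨c, d⟩ h
  simp only [pairEmb, Prod.mk.injEq] at h ⊢
  omega


/-- Iterated integral representation of the double polylogarithm `Li_{p,q}(z)`:
`∫_{Δ^{p+q}(0,z)} 1/(1−t₁) ∏_{i=2}^p 1/tᵢ ⬝ 1/(1−t_{p+1}) ∏_{i=p+2}^{p+q} 1/tᵢ dt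
  = Σ_{0<j<k} z^k/(j^p k^q)`. -/
theorem double_polylog_iterInt (p q : ℕ) (hp : 1 ≤ p) (hq : 1 ≤ q)
    (z : ℝ) (hz0 : 0 < z) (hz1 : z < 1) :
    IntegrableOn (fun t : Fin (p + q) → ℝ =>
        ∏ i : Fin (p + q), if i.val = 0 ∨ i.val = p then 1 / (1 - t i) else 1 / t i)
      (simplex (p + q) 0 z) ∧
    Summable (fun jk : ℕ × ℕ =>
        if 0 < jk.1 ∧ jk.1 < jk.2 then
          z ^ jk.2 / ((jk.1 : ℝ) ^ p * (jk.2 : ℝ) ^ q) else 0) ∧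
    (∫ t in simplex (p + q) 0 z,
        ∏ i : Fin (p + q), if i.val = 0 ∨ i.val = p then 1 / (1 - t i) else 1 / t i) =
      ∑' jk : ℕ × ℕ,
        if 0 < jk.1 ∧ jk.1 < jk.2 then
          z ^ jk.2 / ((jk.1 : ℝ) ^ p * (jk.2 : ℝ) ^ q) else 0 := by
  classical
  set F : (Fin (p + q) → ℝ) → ℝ := fun t =>
    ∏ i : Fin (p + q), if i.val = 0 ∨ i.val = p then 1 / (1 - t i) else 1 / t i with hF
  set G : ℕ × ℕ → ℝ := fun jk =>
    if 0 < jk.1 ∧ jk.1 < jk.2 then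
      z ^ jk.2 / ((jk.1 : ℝ) ^ p * (jk.2 : ℝ) ^ q) else 0 with hG
  have hFw : F = fun t => ∏ i : Fin (p + q), polylogWeight p i (t i) := rfl
  have hsupp : Function.support G ⊆ Set.range pairEmb := by
    rintro ⟨j, k⟩ h
    have hjk : 0 < j ∧ j < k := by
      by_contra hc
      exact h (if_neg hc)
    refine ⟨(j - 1, k - j - 1), ?_⟩
    simp only [pairEmb, Prod.mk.injEq]
    omega
  have hGe : ∀ x : ℕ × ℕ, G (pairEmb x) = 1 / (((x.1 : ℝ) + 1) ^ p *
      (((x.1 + 1 + x.2 : ℕ) : ℝ) + 1) ^ q) * z ^ (x.1 + 1 + x.2 + 1) := by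
    intro x
    have : 0 < (pairEmb x).1 ∧ (pairEmb x).1 < (pairEmb x).2 := by
      simp only [pairEmb]
      omega
    simp only [hG]
    rw [if_pos this]
    simp only [pairEmb]
    push_cast
    ring
  have hG0 : ∀ x, 0 ≤ G (pairEmb x) := fun x => by
    rw [hGe]
    positivity
  have hsum' : Summable fun x => G (pairEmb x) := by
    have hgeo := summable_geometric_of_lt_one hz0.le hz1
    refine Summable.of_nonneg_of_le hG0 (fun x => ?_)
      (hgeo.mul_of_nonneg hgeo (fun n => by positivity) (fun n => by positivity))
    rw [hGe, ← pow_add]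
    have h1 : 1 / (((x.1 : ℝ) + 1) ^ p * (((x.1 + 1 + x.2 : ℕ) : ℝ) + 1) ^ q) ≤ 1 := by
      refine div_le_one_of_le₀ (one_le_mul_of_one_le_of_one_le (one_le_pow₀ ?_)
        (one_le_pow₀ ?_)) (by positivity) <;> simp [add_nonneg]
    calc _ ≤ 1 * z ^ (x.1 + 1 + x.2 + 1) := by gcongr
      _ ≤ z ^ (x.1 + x.2) := by
        rw [one_mul]
        exact pow_le_pow_of_le_one hz0.le hz1.le (by omega)
  have hsum : Summable G :=
    (pairEmb_injective.summable_iff fun x hx => by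
      by_contra h
      exact hx (hsupp h)).1 hsum'
  have htsum : ∑' x, G (pairEmb x) = ∑' x, G x := pairEmb_injective.tsum_eq hsupp
  have hmeas : Measurable F := by
    rw [hFw]
    exact Finset.measurable_prod _ fun i _ =>
      (measurable_polylogWeight p i).comp (measurable_pi_apply i)
  have hpos : ∀ t ∈ simplex (p + q) 0 z, ∀ i : Fin (p + q), 0 ≤ polylogWeight p i (t i) := by
    intro t ht i
    have h0 := (ht.2 i).1
    have h1 : 0 ≤ 1 - t i := by linarith [(ht.2 i).2]
    unfold polylogWeight
    split_ifs <;> positivity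
  have hF0 : 0 ≤ᵐ[volume.restrict (simplex (p + q) 0 z)] F :=
    (ae_restrict_iff' (measurableSet_simplex _ _ _)).2 (.of_forall fun t ht =>
      Finset.prod_nonneg fun i _ => hpos t ht i)
  have hlint : ∫⁻ t in simplex (p + q) 0 z, ENNReal.ofReal (F t) =
      ENNReal.ofReal (∑' x, G x) := by
    rw [← htsum, ENNReal.ofReal_tsum_of_nonneg hG0 hsum']
    have h1 := lintegral_simplex (fun i s => ENNReal.ofReal (polylogWeight p i s))
      (fun i => (measurable_polylogWeight p i).ennreal_ofReal) (p + q) z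
    have h2 : wordInt (fun i s => ENNReal.ofReal (polylogWeight p i s)) (p + q) z =
        ∑' x, ENNReal.ofReal (G (pairEmb x)) := by
      simp only [hGe]
      obtain ⟨r, rfl⟩ : ∃ r, q = r + 1 := ⟨q - 1, by omega⟩
      exact wordInt_double p r hp hz0.le hz1
    rw [← h2, ← h1]
    refine setLIntegral_congr_fun (measurableSet_simplex _ _ _) fun t ht => ?_
    exact ENNReal.ofReal_prod_of_nonneg fun i _ => hpos t ht i
  refine ⟨⟨hmeas.aestronglyMeasurable, ?_⟩, hsum, ?_⟩
  · rw [hasFiniteIntegral_iff_ofReal hF0, hlint]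
    exact ENNReal.ofReal_lt_top
  · rw [integral_eq_lintegral_of_nonneg_ae hF0 hmeas.aestronglyMeasurable, hlint,
      ENNReal.toReal_ofReal]
    exact htsum ▸ tsum_nonneg hG0
end

section
/- Iterated integral representation of zeta values: For every integer n ≥ 2, the function (t₁,…,tₙ) ↦ (1/(1−t₁)) · ∏_{i=2}^n (1/tᵢ) is Lebesgue-integrable on Δⁿ(0,1) and ∫_{Δⁿ(0,1)} (1/(1−t₁)) · ∏_{i=2}^n (1/tᵢ) dt₁⋯dtₙ = Σ_{k=1}^∞ 1/kⁿ. -/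
/-!
Expand the first factor as a geometric series, `1 / (1 - t₁) = ∑ₖ t₁ᵏ`, which is valid almost
everywhere on the simplex because the hyperplane `t₁ = 1` is null. All terms are nonnegative, so in
`ℝ≥0∞` the sum and the integral may be exchanged without any integrability hypothesis. The integral
of each term is computed by integrating over the largest variable last: by
`lintegral_simplex_succ` and induction on the dimension,
`∫ t₁ᵏ / (t₂ ⋯ tₙ)` over `Δⁿ(0,b)` equals `bᵏ⁺¹ / (k+1)ⁿ` (`lintegral_simplex_pow`).
At `b = 1` the terms sum to a finite value since `n ≥ 2`; this gives both the integrability and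
the value of the Bochner integral.
-/

open MeasureTheory

/-- The simplices with varying upper end form a closed subset of `ℝ × ℝⁿ`. -/
theorem isClosed_setOf_mem_simplex (n : ℕ) (a : ℝ) :
    IsClosed {p : ℝ × (Fin n → ℝ) | p.2 ∈ simplex n a p.1} := by
  have h : {p : ℝ × (Fin n → ℝ) | p.2 ∈ simplex n a p.1} =
      (⋂ i, ⋂ j, ⋂ (_ : i ≤ j), {p | p.2 i ≤ p.2 j}) ∩
        ⋂ i, ({p | a ≤ p.2 i} ∩ {p | p.2 i ≤ p.1}) := by
    ext p
    simp [simplex, Monotone]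
  rw [h]
  refine IsClosed.inter ?_ ?_
  · exact isClosed_iInter fun i => isClosed_iInter fun j => isClosed_iInter fun _ =>
      isClosed_le (by fun_prop) (by fun_prop)
  · exact isClosed_iInter fun i => IsClosed.inter
      (isClosed_le (by fun_prop) (by fun_prop)) (isClosed_le (by fun_prop) (by fun_prop))

theorem isClosed_simplex (n : ℕ) (a b : ℝ) : IsClosed (simplex n a b) :=
  (isClosed_setOf_mem_simplex n a).preimage
    (show Continuous fun t : Fin n → ℝ => (b, t) by fun_prop)

theorem mem_simplex_succ {n : ℕ} {a b : ℝ} (t : Fin (n + 1) → ℝ) :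
    t ∈ simplex (n + 1) a b ↔
      t (Fin.last n) ∈ Set.Icc a b ∧
        (fun i : Fin n => t i.castSucc) ∈ simplex n a (t (Fin.last n)) := by
  constructor
  · rintro ⟨hm, hI⟩
    exact ⟨hI _, fun i j hij => hm (Fin.castSucc_le_castSucc_iff.2 hij),
      fun i => ⟨(hI _).1, hm (Fin.le_last _)⟩⟩
  · rintro ⟨hl, hm, hI⟩
    refine ⟨fun i j hij => ?_, fun i => ?_⟩
    · induction j using Fin.lastCases with
      | last =>
        induction i using Fin.lastCases with
        | last => exact le_rfl
        | cast i => exact (hI i).2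
      | cast j =>
        induction i using Fin.lastCases with
        | last => exact absurd hij (not_le.2 (Fin.castSucc_lt_last j))
        | cast i => exact hm (Fin.castSucc_le_castSucc_iff.1 hij)
    · induction i using Fin.lastCases with
      | last => exact hl
      | cast i => exact ⟨(hI i).1, (hI i).2.trans hl.2⟩

/-- Tonelli on the simplex: the largest variable `s` is integrated last, the remaining ones ranging
over the simplex with upper end `s`. -/
theorem lintegral_simplex_succ (n : ℕ) (a b : ℝ) (H : (Fin n → ℝ) → ENNReal) (hH : Measurable H)
    (g : ℝ → ENNReal) (hg : Measurable g) :
    ∫⁻ t in simplex (n + 1) a b, H (fun i => t i.castSucc) * g (t (Fin.last n)) =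
      ∫⁻ s in Set.Icc a b, (∫⁻ u in simplex n a s, H u) * g s := by
  set S : Set (ℝ × (Fin n → ℝ)) := {p | p.1 ∈ Set.Icc a b ∧ p.2 ∈ simplex n a p.1}
  have hSm : MeasurableSet S := (measurableSet_Icc.preimage measurable_fst).inter
    (isClosed_setOf_mem_simplex n a).measurableSet
  have hmemS : ∀ s u, (s, u) ∈ S ↔ s ∈ Set.Icc a b ∧ u ∈ simplex n a s := fun _ _ => Iff.rfl
  -- From here on only `hSm` and `hmemS` are used about `S`; keeping its body visible would make
  -- the decidability instances for `S.indicator` ambiguous.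
  clear_value S
  have hΦ : Measurable (S.indicator fun p => H p.2 * g p.1) := by
    refine Measurable.indicator ?_ hSm
    fun_prop
  have he := volume_preserving_piFinSuccAbove (fun _ : Fin (n + 1) => ℝ) (Fin.last n)
  rw [← lintegral_indicator (isClosed_simplex _ _ _).measurableSet,
    ← lintegral_indicator measurableSet_Icc]
  calc _ = ∫⁻ t, (S.indicator fun p => H p.2 * g p.1)
            (MeasurableEquiv.piFinSuccAbove (fun _ : Fin (n + 1) => ℝ) (Fin.last n) t) := by
        refine lintegral_congr fun t => ?_
        have h1 : MeasurableEquiv.piFinSuccAbove (fun _ : Fin (n + 1) => ℝ) (Fin.last n) t =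
            (t (Fin.last n), fun i : Fin n => t i.castSucc) := by
          ext i
          · rfl
          · simp [MeasurableEquiv.piFinSuccAbove, Fin.init]
        rw [h1]
        simp only [Set.indicator]
        classical exact if_congr ((mem_simplex_succ t).trans (hmemS _ _).symm) rfl rfl
    _ = ∫⁻ p, (S.indicator fun p => H p.2 * g p.1) p := he.lintegral_comp hΦ
    _ = ∫⁻ s, ∫⁻ u, (S.indicator fun p => H p.2 * g p.1) (s, u) :=
        lintegral_prod _ hΦ.aemeasurable
    _ = _ := by
        refine lintegral_congr fun s => ?_
        by_cases hs : s ∈ Set.Icc a b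
        · rw [Set.indicator_of_mem hs, ← lintegral_mul_const _ hH,
            ← lintegral_indicator (isClosed_simplex _ _ _).measurableSet]
          refine lintegral_congr fun u => ?_
          simp only [Set.indicator]
          classical exact if_congr ((hmemS s u).trans (and_iff_right hs)) rfl rfl
        · simp only [Set.indicator, hmemS, hs, false_and, if_false,
            lintegral_zero]

theorem lintegral_Icc_pow_div (k : ℕ) {b c : ℝ} (hb : 0 ≤ b) (hc : 0 ≤ c) :
    ∫⁻ s in Set.Icc 0 b, ENNReal.ofReal (s ^ k / c) =
      ENNReal.ofReal (b ^ (k + 1) / (c * (k + 1))) := by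
  rw [← ofReal_integral_eq_lintegral_ofReal]
  · rw [integral_Icc_eq_integral_Ioc, ← intervalIntegral.integral_of_le hb,
      intervalIntegral.integral_div, integral_pow]
    congr 1
    simp [div_div, mul_comm]
  · exact (Continuous.continuousOn (by fun_prop)).integrableOn_Icc
  · filter_upwards [ae_restrict_mem measurableSet_Icc] with s hs
    exact div_nonneg (pow_nonneg hs.1 _) hc

/-- The contribution of the `k`-th term of the geometric series, over the simplex with upper
end `b`; the general `b` is what makes the induction on the dimension work. -/
theorem lintegral_simplex_pow (k m : ℕ) {b : ℝ} (hb : 0 ≤ b) :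
    ∫⁻ t in simplex (m + 1) 0 b, ∏ i : Fin (m + 1),
        (if i.val = 0 then ENNReal.ofReal (t i ^ k) else ENNReal.ofReal (1 / t i)) =
      ENNReal.ofReal (b ^ (k + 1) / ((k : ℝ) + 1) ^ (m + 1)) := by
  induction m generalizing b with
  | zero =>
    have h := lintegral_simplex_succ 0 0 b (fun _ => 1) measurable_const
      (fun s => ENNReal.ofReal (s ^ k)) (by fun_prop)
    have h0 : ∀ s : ℝ, simplex 0 0 s = Set.univ := fun s =>
      Set.eq_univ_of_forall fun t => ⟨fun i => i.elim0, fun i => i.elim0⟩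
    have h1 := lintegral_Icc_pow_div k hb zero_le_one
    simp only [h0, Measure.restrict_univ, lintegral_const, one_mul, volume_pi,
      Measure.pi_empty_univ] at h
    simp only [div_one, one_mul] at h1
    simpa [h1, volume_pi] using h
  | succ m ih =>
    have h := lintegral_simplex_succ (m + 1) 0 b
      (fun t => ∏ i : Fin (m + 1),
        (if i.val = 0 then ENNReal.ofReal (t i ^ k) else ENNReal.ofReal (1 / t i)))
      (Finset.measurable_prod _ fun i _ => by split_ifs <;> fun_prop)
      (fun s => ENNReal.ofReal (1 / s)) (by fun_prop)
    simp only [Fin.prod_univ_castSucc (n := m + 1), Fin.val_castSucc, Fin.val_last,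
      Nat.add_one_ne_zero, if_false]
    rw [h, pow_succ _ (m + 1), ← lintegral_Icc_pow_div k hb (by positivity)]
    refine lintegral_congr_ae ?_
    -- The origin is discarded: there `1 / s = 0`, whereas the simplified integrand may be nonzero.
    filter_upwards [ae_restrict_mem measurableSet_Icc,
      Measure.ae_ne (volume.restrict (Set.Icc 0 b)) (0 : ℝ)] with s hs hs0
    rw [ih hs.1, ← ENNReal.ofReal_mul (div_nonneg (pow_nonneg hs.1 _) (by positivity))]
    congr 1
    field_simp
    ring

/-- Iterated integral representation of zeta values:
`∫_{Δⁿ(0,1)} 1/(1−t₁) ∏_{i=2}^n 1/tᵢ dt = Σ_{k≥1} 1/kⁿ` for `n ≥ 2`. -/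
theorem zeta_iterInt (n : ℕ) (hn : 2 ≤ n) :
    IntegrableOn (fun t : Fin n → ℝ =>
        ∏ i : Fin n, if i.val = 0 then 1 / (1 - t i) else 1 / t i) (simplex n 0 1) ∧
    (∫ t in simplex n 0 1, ∏ i : Fin n, if i.val = 0 then 1 / (1 - t i) else 1 / t i) =
      ∑' k : ℕ, 1 / ((k : ℝ) + 1) ^ n := by
  obtain ⟨m, rfl⟩ : ∃ m, n = m + 1 := ⟨n - 1, by omega⟩
  have hsum : Summable fun k : ℕ => 1 / ((k : ℝ) + 1) ^ (m + 1) := by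
    have := (summable_nat_add_iff 1).2 (Real.summable_one_div_nat_pow.2 (show 1 < m + 1 by omega))
    simpa using this
  have hmeas : Measurable fun t : Fin (m + 1) → ℝ =>
      ∏ i : Fin (m + 1), if i.val = 0 then 1 / (1 - t i) else 1 / t i :=
    Finset.measurable_prod _ fun i _ => by split_ifs <;> fun_prop
  have hmem := ae_restrict_mem (μ := volume) (isClosed_simplex (m + 1) 0 1).measurableSet
  have hnn : ∀ᵐ t ∂(volume.restrict (simplex (m + 1) 0 1)),
      0 ≤ ∏ i : Fin (m + 1), if i.val = 0 then 1 / (1 - t i) else 1 / t i := by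
    filter_upwards [hmem] with t ht
    refine Finset.prod_nonneg fun i _ => ?_
    have := ht.2 i
    split_ifs
    · exact one_div_nonneg.2 (sub_nonneg.2 this.2)
    · exact one_div_nonneg.2 this.1
  have hne : ∀ᵐ t : Fin (m + 1) → ℝ, t 0 ≠ 1 := Measure.ae_eval_ne (μ := fun _ => volume) 0 1
  have hlint : ∫⁻ t in simplex (m + 1) 0 1, ENNReal.ofReal
        (∏ i : Fin (m + 1), if i.val = 0 then 1 / (1 - t i) else 1 / t i) =
      ENNReal.ofReal (∑' k : ℕ, 1 / ((k : ℝ) + 1) ^ (m + 1)) := by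
    rw [ENNReal.ofReal_tsum_of_nonneg (fun k => by positivity) hsum]
    have hk : ∀ k : ℕ, ENNReal.ofReal (1 / ((k : ℝ) + 1) ^ (m + 1)) =
        ∫⁻ t in simplex (m + 1) 0 1, ∏ i : Fin (m + 1),
          (if i.val = 0 then ENNReal.ofReal (t i ^ k) else ENNReal.ofReal (1 / t i)) :=
      fun k => by rw [lintegral_simplex_pow k m zero_le_one, one_pow]
    simp only [hk]
    rw [← lintegral_tsum fun k => (Finset.measurable_prod _ fun i _ => by
      split_ifs <;> fun_prop).aemeasurable]
    refine lintegral_congr_ae ?_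
    filter_upwards [hmem, ae_restrict_of_ae hne] with t ht ht1
    have h0 := ht.2 0
    have hlt : t 0 < 1 := lt_of_le_of_ne h0.2 ht1
    have hgeo : ENNReal.ofReal (1 / (1 - t 0)) = ∑' k : ℕ, ENNReal.ofReal (t 0 ^ k) := by
      rw [← ENNReal.ofReal_tsum_of_nonneg (fun k => pow_nonneg h0.1 k)
        (summable_geometric_of_lt_one h0.1 hlt), tsum_geometric_of_lt_one h0.1 hlt, one_div]
    rw [Fin.prod_univ_succ, ENNReal.ofReal_mul
      (by simpa using hlt.le), ENNReal.ofReal_prod_of_nonneg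
      (fun i _ => by simpa using (ht.2 i.succ).1)]
    simp only [Fin.prod_univ_succ, Fin.val_zero, if_true, Fin.val_succ, Nat.add_one_ne_zero,
      if_false]
    rw [hgeo, ENNReal.tsum_mul_right]
  constructor
  · refine ⟨hmeas.aestronglyMeasurable, ?_⟩
    rw [hasFiniteIntegral_iff_ofReal hnn, hlint]
    exact ENNReal.ofReal_lt_top
  · rw [integral_eq_lintegral_of_nonneg_ae hnn hmeas.aestronglyMeasurable, hlint,
      ENNReal.toReal_ofReal (tsum_nonneg fun k => by positivity)]
end

section
/- The dilogarithm integral at 1: ∫_{Δ²(0,1)} 1/((1−t₁)·t₂) dt₁ dt₂ = π²/6, where the integrand is Lebesgue-integrable on the simplex Δ²(0,1) = {(t₁,t₂) | 0 ≤ t₁ ≤ t₂ ≤ 1}. -/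
/-!
Everything is nonnegative, so the integral can be computed as a Lebesgue integral with values in
`ℝ≥0∞`, where Tonelli's theorem and termwise integration of series need no integrability
hypothesis; finiteness of the result then gives integrability. For `0 < y < 1`, the geometric
series gives `∫₀^y dx / ((1 - x) y) = ∑ₙ yⁿ / (n + 1)`, and integrating over `0 < y < 1` yields
`∑ₙ 1 / (n + 1)² = ζ(2) = π² / 6`. The heights `y = 0` and `y = 1`, where this expansion is not
available, form a null set.
-/

open MeasureTheory

lemma lintegral_pow_Icc (n : ℕ) {y : ℝ} (hy : 0 ≤ y) :
    ∫⁻ x in Set.Icc 0 y, ENNReal.ofReal (x ^ n) = ENNReal.ofReal (y ^ (n + 1) / (n + 1)) := by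
  rw [← ofReal_integral_eq_lintegral_ofReal]
  · rw [integral_Icc_eq_integral_Ioc, ← intervalIntegral.integral_of_le hy, integral_pow]
    simp
  · exact (continuous_pow n).integrableOn_Icc
  · filter_upwards [ae_restrict_mem measurableSet_Icc] with x hx
    exact pow_nonneg hx.1 n

/-- The inner integral over `t₁`, as a power series in `y = t₂`. -/
lemma lintegral_inner {y : ℝ} (h0 : 0 < y) (h1 : y < 1) :
    ∫⁻ x in Set.Icc 0 y, ENNReal.ofReal (1 / ((1 - x) * y)) =
      ∑' n : ℕ, ENNReal.ofReal (y ^ n / (n + 1)) := by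
  have key : ∀ x ∈ Set.Icc 0 y, ENNReal.ofReal (1 / ((1 - x) * y)) =
      ∑' n : ℕ, ENNReal.ofReal (1 / y) * ENNReal.ofReal (x ^ n) := by
    intro x hx
    have hx1 : x < 1 := hx.2.trans_lt h1
    rw [ENNReal.tsum_mul_left, ← ENNReal.ofReal_tsum_of_nonneg (fun n => pow_nonneg hx.1 n)
      (summable_geometric_of_lt_one hx.1 hx1), tsum_geometric_of_lt_one hx.1 hx1,
      ← ENNReal.ofReal_mul (by positivity)]
    congr 1
    rw [one_div, mul_inv, one_div, mul_comm]
  rw [setLIntegral_congr_fun measurableSet_Icc key, lintegral_tsum (fun n => by fun_prop)]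
  refine tsum_congr fun n => ?_
  rw [lintegral_const_mul _ (by fun_prop), lintegral_pow_Icc n h0.le,
    ← ENNReal.ofReal_mul (by positivity)]
  congr 1
  field_simp
  ring

lemma lintegral_outer :
    ∫⁻ y in Set.Icc (0 : ℝ) 1, ∑' n : ℕ, ENNReal.ofReal (y ^ n / (n + 1)) =
      ENNReal.ofReal (Real.pi ^ 2 / 6) := by
  rw [lintegral_tsum (fun n => by fun_prop)]
  have hz : HasSum (fun n : ℕ => (1 : ℝ) / ((n : ℝ) + 1) ^ 2) (Real.pi ^ 2 / 6) := by
    simpa using (hasSum_nat_add_iff' 1).mpr hasSum_zeta_two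
  rw [← hz.tsum_eq, ENNReal.ofReal_tsum_of_nonneg (fun n => by positivity) hz.summable]
  refine tsum_congr fun n => ?_
  have h : ∀ y : ℝ, ENNReal.ofReal (y ^ n / (n + 1)) =
      ENNReal.ofReal (1 / (n + 1)) * ENNReal.ofReal (y ^ n) := by
    intro y
    rw [← ENNReal.ofReal_mul (by positivity)]
    congr 1
    ring
  simp_rw [h]
  rw [lintegral_const_mul _ (by fun_prop), lintegral_pow_Icc n zero_le_one,
    ← ENNReal.ofReal_mul (by positivity)]
  congr 1
  rw [one_pow]
  field_simp

lemma mem_simplex_two (t : Fin 2 → ℝ) : t ∈ simplex 2 0 1 ↔ 0 ≤ t 0 ∧ t 0 ≤ t 1 ∧ t 1 ≤ 1 := by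
  simp only [simplex, Set.mem_ofPred_eq, Fin.forall_fin_two, Set.mem_Icc]
  constructor
  · rintro ⟨hm, ⟨h0, -⟩, -, h1⟩
    exact ⟨h0, hm (Fin.zero_le 1), h1⟩
  · rintro ⟨h0, h, h1⟩
    refine ⟨?_, ⟨h0, h.trans h1⟩, h0.trans h, h1⟩
    intro i j hij
    fin_cases i <;> fin_cases j <;> simp_all

/-- The simplex `Δ²(0,1)` as a subset of `ℝ × ℝ`. -/
def triangle : Set (ℝ × ℝ) := {p | 0 ≤ p.1 ∧ p.1 ≤ p.2 ∧ p.2 ≤ 1}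

lemma measurableSet_triangle : MeasurableSet triangle :=
  (measurableSet_le measurable_const measurable_fst).inter
    ((measurableSet_le measurable_fst measurable_snd).inter
      (measurableSet_le measurable_snd measurable_const))

lemma simplex_two_eq_preimage :
    simplex 2 0 1 = MeasurableEquiv.finTwoArrow (α := ℝ) ⁻¹' triangle := by
  ext t
  exact mem_simplex_two t

lemma lintegral_triangle :
    ∫⁻ p in triangle, ENNReal.ofReal (1 / ((1 - p.1) * p.2)) =
      ENNReal.ofReal (Real.pi ^ 2 / 6) := by
  have hm : Measurable fun p : ℝ × ℝ => ENNReal.ofReal (1 / ((1 - p.1) * p.2)) := by fun_prop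
  rw [← lintegral_indicator measurableSet_triangle, Measure.volume_eq_prod,
    lintegral_prod_symm' _ (hm.indicator measurableSet_triangle), ← lintegral_outer,
    ← lintegral_indicator measurableSet_Icc]
  refine lintegral_congr_ae ?_
  filter_upwards [Measure.ae_ne volume (0 : ℝ), Measure.ae_ne volume (1 : ℝ)] with y hy0 hy1
  by_cases hy : y ∈ Set.Icc (0 : ℝ) 1
  · rw [Set.indicator_of_mem hy,
      ← lintegral_inner (lt_of_le_of_ne hy.1 hy0.symm) (lt_of_le_of_ne hy.2 hy1),
      ← lintegral_indicator measurableSet_Icc]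
    refine lintegral_congr fun x => ?_
    simp only [Set.indicator, triangle, Set.mem_ofPred_eq, Set.mem_Icc, hy.2, and_true]
  · rw [Set.indicator_of_notMem hy]
    refine (lintegral_congr fun x => Set.indicator_of_notMem ?_ _).trans lintegral_zero
    rintro ⟨h0, h, h1⟩
    exact hy ⟨h0.trans h, h1⟩

lemma lintegral_simplex_s14 :
    ∫⁻ t in simplex 2 0 1, ENNReal.ofReal (1 / ((1 - t 0) * t 1)) =
      ENNReal.ofReal (Real.pi ^ 2 / 6) := by
  rw [← lintegral_triangle, simplex_two_eq_preimage]
  exact (volume_preserving_finTwoArrow ℝ).setLIntegral_comp_preimage_emb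
    MeasurableEquiv.finTwoArrow.measurableEmbedding
    (fun p => ENNReal.ofReal (1 / ((1 - p.1) * p.2))) triangle

/-- The dilogarithm integral at 1: `∫_{Δ²(0,1)} dt₁dt₂/((1−t₁)t₂) = π²/6`. -/
theorem dilog_at_one :
    IntegrableOn (fun t : Fin 2 → ℝ => 1 / ((1 - t 0) * t 1)) (simplex 2 0 1) ∧
    (∫ t in simplex 2 0 1, 1 / ((1 - t 0) * t 1)) = Real.pi ^ 2 / 6 := by
  have hS : MeasurableSet (simplex 2 0 1) := by
    rw [simplex_two_eq_preimage]
    exact MeasurableEquiv.finTwoArrow.measurable measurableSet_triangle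
  have hm : AEStronglyMeasurable (fun t : Fin 2 → ℝ => 1 / ((1 - t 0) * t 1))
      (volume.restrict (simplex 2 0 1)) :=
    Measurable.aestronglyMeasurable (by fun_prop)
  have hnn : 0 ≤ᵐ[volume.restrict (simplex 2 0 1)]
      fun t : Fin 2 → ℝ => 1 / ((1 - t 0) * t 1) := by
    filter_upwards [ae_restrict_mem hS] with t ht
    obtain ⟨h0, h, h1⟩ := (mem_simplex_two t).1 ht
    exact one_div_nonneg.2 (mul_nonneg (sub_nonneg.2 (h.trans h1)) (h0.trans h))
  constructor
  · refine ⟨hm, ?_⟩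
    rw [hasFiniteIntegral_iff_ofReal hnn, lintegral_simplex_s14]
    exact ENNReal.ofReal_lt_top
  · rw [integral_eq_lintegral_of_nonneg_ae hnn hm, lintegral_simplex_s14,
      ENNReal.toReal_ofReal (by positivity)]
end
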